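/- For every integer n ≥ 1, the set of chains of subsimplices of [n] is finite of cardinality exactly 3^{n−1}; equivalently, the chains of subsimplices of [n] are in bijection with the functions from {1, …, n−1} to a three-element set, i.e. with the facets of the (n−1)-dimensional cube. -/

import Mathlib

/-!
STATEMENT 13: For every integer `n ≥ 1`, the set of chains of subsimplices of `[n]` is finite
of cardinality exactly `3^(n-1)`; equivalently, the chains of subsimplices of `[n]` are in
bijection with the functions from `{1, …, n-1}` to a three-element set, i.e. with the facets
of the `(n-1)`-dimensional cube.
-/

/-- A chain of subsimplices of `[n] = {0, 1, …, n}`: a nonempty finite sequence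
`J₁, …, J_ℓ` of subsets of `{0, …, n}` such that each `J_a` has at least two elements,
`min J₁ = 0`, `max J_ℓ = n`, `max J_a = min J_{a+1}` for consecutive terms, and every
element of an earlier term is at most every element of a later term. -/
structure SubsimplexChain (n : ℕ) where
  /-- the underlying sequence `J₁, …, J_ℓ` of subsets of `{0, 1, …, n}` -/
  pieces : List (Finset (Fin (n + 1)))
  pieces_ne : pieces ≠ []
  two_le_card : ∀ J ∈ pieces, 2 ≤ J.card
  min_head : ∀ h : (pieces.head pieces_ne).Nonempty, (pieces.head pieces_ne).min' h = 0
  max_last : ∀ h : (pieces.getLast pieces_ne).Nonempty,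
    (pieces.getLast pieces_ne).max' h = Fin.last n
  adjacent : pieces.Chain' fun J K => ∀ (hJ : J.Nonempty) (hK : K.Nonempty),
    J.max' hJ = K.min' hK
  ordered : pieces.Pairwise fun J K => ∀ a ∈ J, ∀ b ∈ K, a ≤ b


namespace SSC

variable {α : Type*} [LinearOrder α] [OrderTop α]

/-- Recursive form of the chain condition, starting at `a`. -/
def V : α → List (Finset α) → Prop
  | a, [] => a = ⊤
  | a, J :: l => a ∈ J ∧ (∀ x ∈ J, a ≤ x) ∧ ∃ b ∈ J, a < b ∧ (∀ x ∈ J, x ≤ b) ∧ V b l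

/-- replace -/
def f1 (a a' : α) : List (Finset α) → List (Finset α)
  | [] => []
  | J :: l => insert a (J.erase a') :: l

/-- new edge -/
def f2 (a a' : α) (l : List (Finset α)) : List (Finset α) := {a, a'} :: l

/-- insert -/
def f3 (a : α) : List (Finset α) → List (Finset α)
  | [] => []
  | J :: l => insert a J :: l

lemma V_union {a a' : α} (h : a ⋖ a') (h' : a' ≠ ⊤) :
    {l | V a l} = f1 a a' '' {l | V a' l} ∪ (f2 a a' '' {l | V a' l} ∪ f3 a '' {l | V a' l}) := by
  have hlt := h.lt
  have hc : ∀ x, a ≤ x → x ≠ a → a' ≤ x := fun x h1 h2 =>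
    h.ge_of_gt (lt_of_le_of_ne h1 (Ne.symm h2))
  ext l
  simp only [Set.mem_union, Set.mem_image, Set.mem_setOf_eq]
  constructor
  · intro hl
    cases l with
    | nil => exact absurd (hl ▸ hlt) (not_top_lt)
    | cons J t =>
      obtain ⟨ha, hmin, b, hb, hab, hmax, ht⟩ := hl
      have hb' : a' ≤ b := hc b hab.le hab.ne'
      by_cases hJ : a' ∈ J
      · rcases eq_or_lt_of_le hb' with e | hlt'
        · subst e
          refine Or.inr (Or.inl ⟨t, ht, ?_⟩)
          have : J = {a, a'} := by
            ext x
            simp only [Finset.mem_insert, Finset.mem_singleton]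
            constructor
            · intro hx
              by_cases hxa : x = a
              · exact Or.inl hxa
              · exact Or.inr (le_antisymm (hmax x hx) (hc x (hmin x hx) hxa))
            · rintro (rfl | rfl) <;> assumption
          rw [this]; rfl
        · refine Or.inr (Or.inr ⟨J.erase a :: t, ⟨?_, ?_, b, ?_, hlt', ?_, ht⟩, ?_⟩)
          · exact Finset.mem_erase.2 ⟨hlt.ne', hJ⟩
          · intro x hx
            rw [Finset.mem_erase] at hx
            exact hc x (hmin x hx.2) hx.1
          · exact Finset.mem_erase.2 ⟨hab.ne', hb⟩
          · intro x hx
            exact hmax x (Finset.mem_of_mem_erase hx)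
          · simp [f3, Finset.insert_erase ha]
      · have hlt' : a' < b := lt_of_le_of_ne hb' (fun e => hJ (e ▸ hb))
        refine Or.inl ⟨insert a' (J.erase a) :: t, ⟨?_, ?_, b, ?_, hlt', ?_, ht⟩, ?_⟩
        · simp
        · intro x hx
          rw [Finset.mem_insert, Finset.mem_erase] at hx
          rcases hx with rfl | hx
          · exact le_rfl
          · exact hc x (hmin x hx.2) hx.1
        · simp [hb, hab.ne']
        · intro x hx
          rw [Finset.mem_insert, Finset.mem_erase] at hx
          rcases hx with rfl | hx
          · exact hb'
          · exact hmax x hx.2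
        · have : a' ∉ J.erase a := fun hx => hJ (Finset.mem_of_mem_erase hx)
          simp [f1, Finset.erase_insert this, Finset.insert_erase ha]
  · rintro (⟨l, hl, rfl⟩ | ⟨l, hl, rfl⟩ | ⟨l, hl, rfl⟩)
    · cases l with
      | nil => exact absurd hl h'
      | cons J t =>
        obtain ⟨ha, hmin, b, hb, hab, hmax, ht⟩ := hl
        refine ⟨by simp, ?_, b, ?_, hlt.trans hab, ?_, ht⟩
        · intro x hx
          rw [Finset.mem_insert, Finset.mem_erase] at hx
          rcases hx with rfl | hx
          · exact le_rfl
          · exact hlt.le.trans (hmin x hx.2)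
        · simp [hb, hab.ne']
        · intro x hx
          rw [Finset.mem_insert, Finset.mem_erase] at hx
          rcases hx with rfl | hx
          · exact (hlt.trans hab).le
          · exact hmax x hx.2
    · refine ⟨by simp, ?_, a', by simp, hlt, ?_, hl⟩
      · intro x hx
        simp only [Finset.mem_insert, Finset.mem_singleton] at hx
        rcases hx with rfl | rfl
        · exact le_rfl
        · exact hlt.le
      · intro x hx
        simp only [Finset.mem_insert, Finset.mem_singleton] at hx
        rcases hx with rfl | rfl
        · exact hlt.le
        · exact le_rfl
    · cases l with
      | nil => exact absurd hl h'
      | cons J t =>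
        obtain ⟨ha, hmin, b, hb, hab, hmax, ht⟩ := hl
        refine ⟨by simp, ?_, b, by simp [hb], hlt.trans hab, ?_, ht⟩
        · intro x hx
          rw [Finset.mem_insert] at hx
          rcases hx with rfl | hx
          · exact le_rfl
          · exact hlt.le.trans (hmin x hx)
        · intro x hx
          rw [Finset.mem_insert] at hx
          rcases hx with rfl | hx
          · exact (hlt.trans hab).le
          · exact hmax x hx

lemma inj1 {a a' : α} (h : a < a') (h' : a' ≠ ⊤) : Set.InjOn (f1 a a') {l | V a' l} := by
  rintro (_ | ⟨J, t⟩) hl (_ | ⟨K, s⟩) hm e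
  · rfl
  · exact absurd hl h'
  · exact absurd hm h'
  · obtain ⟨ha, hmin, -⟩ := hl
    obtain ⟨hb, hmin', -⟩ := hm
    simp only [f1, List.cons.injEq] at e
    have h1 : a ∉ J.erase a' := fun hx => absurd (hmin a (Finset.mem_of_mem_erase hx)) h.not_ge
    have h2 : a ∉ K.erase a' := fun hx => absurd (hmin' a (Finset.mem_of_mem_erase hx)) h.not_ge
    have := congrArg (fun S => insert a' (S.erase a)) e.1
    simp only [Finset.erase_insert h1, Finset.erase_insert h2, Finset.insert_erase ha,
      Finset.insert_erase hb] at this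
    rw [this, e.2]

lemma inj3 {a a' : α} (h : a < a') (h' : a' ≠ ⊤) : Set.InjOn (f3 a) {l | V a' l} := by
  rintro (_ | ⟨J, t⟩) hl (_ | ⟨K, s⟩) hm e
  · rfl
  · exact absurd hl h'
  · exact absurd hm h'
  · obtain ⟨ha, hmin, -⟩ := hl
    obtain ⟨hb, hmin', -⟩ := hm
    simp only [f3, List.cons.injEq] at e
    have h1 : a ∉ J := fun hx => absurd (hmin a hx) h.not_ge
    have h2 : a ∉ K := fun hx => absurd (hmin' a hx) h.not_ge
    have := congrArg (fun S => S.erase a) e.1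
    simp only [Finset.erase_insert h1, Finset.erase_insert h2] at this
    rw [this, e.2]

lemma inj2 {a a' : α} : Function.Injective (f2 a a') := by
  intro l m e
  simpa [f2] using e

lemma step {a a' : α} (h : a ⋖ a') (h' : a' ≠ ⊤) (k : ℕ)
    (ih : {l | V a' l}.Finite ∧ {l | V a' l}.ncard = k) :
    {l | V a l}.Finite ∧ {l | V a l}.ncard = k * 3 := by
  obtain ⟨hf, hk⟩ := ih
  rw [V_union h h']
  refine ⟨(hf.image _).union ((hf.image _).union (hf.image _)), ?_⟩
  rw [Set.ncard_union_eq _ (hf.image _) ((hf.image _).union (hf.image _)),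
    Set.ncard_union_eq _ (hf.image _) (hf.image _), Set.ncard_image_of_injOn (inj1 h.lt h'),
    Set.ncard_image_of_injective _ inj2, Set.ncard_image_of_injOn (inj3 h.lt h'), hk]
  · ring
  · rw [Set.disjoint_left]
    rintro _ ⟨l, hl, rfl⟩ ⟨m, hm, e⟩
    cases m with
    | nil => exact absurd hm h'
    | cons J t =>
      obtain ⟨ha, hmin, b, hb, hab, hmax, ht⟩ := hm
      simp only [f2, f3, List.cons.injEq] at e
      have : b ∈ insert a J := by simp [hb]
      rw [e.1] at this
      simp only [Finset.mem_insert, Finset.mem_singleton] at this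
      rcases this with rfl | rfl
      · exact lt_asymm h.lt hab
      · exact lt_irrefl _ hab
  · rw [Set.disjoint_left]
    rintro _ ⟨l, hl, rfl⟩ hu
    cases l with
    | nil => exact absurd hl h'
    | cons J t =>
      have hn : a' ∉ insert a (J.erase a') := by simp [h.lt.ne']
      rcases hu with ⟨m, hm, e⟩ | ⟨m, hm, e⟩
      · simp only [f2, f1, List.cons.injEq] at e
        exact hn (e.1 ▸ by simp)
      · cases m with
        | nil => exact absurd hm h'
        | cons K s =>
          simp only [f3, f1, List.cons.injEq] at e
          exact hn (e.1 ▸ Finset.mem_insert_of_mem hm.1)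

lemma V_top (l : List (Finset α)) : V ⊤ l ↔ l = [] := by
  cases l with
  | nil => simp [V]
  | cons J t =>
    simp only [reduceCtorEq, iff_false]
    rintro ⟨-, -, b, -, hb, -⟩
    exact not_top_lt hb

lemma base {a : α} (h : a ⋖ ⊤) : {l | V a l} = {[{a, ⊤}]} := by
  ext l
  simp only [Set.mem_setOf_eq, Set.mem_singleton_iff]
  constructor
  · intro hl
    cases l with
    | nil => exact absurd hl h.lt.ne
    | cons J t =>
      obtain ⟨ha, hmin, b, hb, hab, hmax, ht⟩ := hl
      have : b = ⊤ := top_le_iff.1 (h.ge_of_gt hab)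
      subst this
      rw [V_top] at ht
      subst ht
      congr 1
      ext x
      simp only [Finset.mem_insert, Finset.mem_singleton]
      constructor
      · intro hx
        by_cases hxa : x = a
        · exact Or.inl hxa
        · exact Or.inr (top_le_iff.1 (h.ge_of_gt (lt_of_le_of_ne (hmin x hx) (Ne.symm hxa))))
      · rintro (rfl | rfl) <;> assumption
  · rintro rfl
    refine ⟨by simp, by simp, ⊤, by simp, h.lt, by simp, rfl⟩

lemma count (n k : ℕ) (hk : k + 1 ≤ n) :
    {l | V (⟨n - (k + 1), by omega⟩ : Fin (n + 1)) l}.Finite ∧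
    {l | V (⟨n - (k + 1), by omega⟩ : Fin (n + 1)) l}.ncard = 3 ^ k := by
  induction k with
  | zero =>
    rw [base]
    · simp
    · rw [Fin.covBy_iff, Nat.covBy_iff_add_one_eq]
      simp [Fin.top_eq_last]; omega
  | succ k ih =>
    rw [pow_succ]
    refine step ?_ ?_ _ (ih (by omega))
    · rw [Fin.covBy_iff, Nat.covBy_iff_add_one_eq]
      simp; omega
    · rw [Fin.top_eq_last, Ne, Fin.ext_iff]
      simp; omega

lemma V_ge {a : α} {l : List (Finset α)} (h : V a l) : ∀ J ∈ l, ∀ x ∈ J, a ≤ x := by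
  induction l generalizing a with
  | nil => simp
  | cons K t ih =>
    obtain ⟨ha, hmin, b, hb, hab, hmax, ht⟩ := h
    intro J hJ x hx
    rcases List.mem_cons.1 hJ with rfl | hJ
    · exact hmin x hx
    · exact hab.le.trans (ih ht J hJ x hx)

lemma V_of (t : List (Finset α)) : ∀ (J : Finset α) (a : α), a ∈ J → (∀ x ∈ J, a ≤ x) →
    (∀ K ∈ J :: t, 2 ≤ K.card) →
    (∀ h : ((J :: t).getLast (by simp)).Nonempty, ((J :: t).getLast (by simp)).max' h = ⊤) →
    (J :: t).IsChain (fun J K => ∀ (hJ : J.Nonempty) (hK : K.Nonempty),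
      J.max' hJ = K.min' hK) → V a (J :: t) := by
  induction t with
  | nil =>
    intro J a ha hmin h2 hlast _
    have hJ : J.Nonempty := ⟨a, ha⟩
    have hm := hlast hJ
    simp only [List.getLast_singleton] at hm
    refine ⟨ha, hmin, J.max' hJ, J.max'_mem _, ?_, fun x hx => J.le_max' x hx, hm⟩
    obtain ⟨b, hb, hba⟩ := Finset.exists_mem_ne (h2 J (by simp)) a
    exact (lt_of_le_of_ne (hmin b hb) hba.symm).trans_le (J.le_max' b hb)
  | cons K t ih =>
    intro J a ha hmin h2 hlast hch
    have hJ : J.Nonempty := ⟨a, ha⟩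
    have hK : K.Nonempty := by
      rw [← Finset.card_pos]; have := h2 K (by simp); omega
    rw [List.isChain_cons_cons] at hch
    have e := hch.1 hJ hK
    refine ⟨ha, hmin, J.max' hJ, J.max'_mem _, ?_, fun x hx => J.le_max' x hx, ?_⟩
    · obtain ⟨b, hb, hba⟩ := Finset.exists_mem_ne (h2 J (by simp)) a
      exact (lt_of_le_of_ne (hmin b hb) hba.symm).trans_le (J.le_max' b hb)
    · rw [e]
      refine ih K _ (K.min'_mem hK) (fun x hx => K.min'_le x hx)
        (fun L hL => h2 L (List.mem_cons_of_mem _ hL)) ?_ hch.2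
      simpa using hlast

lemma of_V (l : List (Finset α)) : ∀ a : α, V a l →
    (∀ K ∈ l, 2 ≤ K.card) ∧
    (∀ (hne : l ≠ []) (h : (l.head hne).Nonempty), (l.head hne).min' h = a) ∧
    (∀ (hne : l ≠ []) (h : (l.getLast hne).Nonempty), (l.getLast hne).max' h = ⊤) ∧
    l.IsChain (fun J K => ∀ (hJ : J.Nonempty) (hK : K.Nonempty), J.max' hJ = K.min' hK) ∧
    l.Pairwise fun J K => ∀ a ∈ J, ∀ b ∈ K, a ≤ b := by
  induction l with
  | nil => intro a _; simp
  | cons J t ih =>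
    rintro a ⟨ha, hmin, b, hb, hab, hmax, ht⟩
    obtain ⟨h1, h2, h3, h4, h5⟩ := ih b ht
    have hmaxb : ∀ hJ : J.Nonempty, J.max' hJ = b := fun hJ =>
      le_antisymm (J.max'_le hJ _ hmax) (J.le_max' b hb)
    refine ⟨?_, ?_, ?_, ?_, ?_⟩
    · intro K hK
      rcases List.mem_cons.1 hK with rfl | hK
      · exact Finset.one_lt_card.2 ⟨a, ha, b, hb, hab.ne⟩
      · exact h1 K hK
    · intro _ h
      exact le_antisymm (J.min'_le a ha) (J.le_min' h _ hmin)
    · intro hne h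
      cases t with
      | nil =>
        have : b = ⊤ := ht
        subst this
        exact hmaxb h
      | cons K s =>
        have := h3 (by simp)
        simp only [List.getLast_cons_cons] at h ⊢
        exact this h
    · cases t with
      | nil => simp
      | cons K s =>
        rw [List.isChain_cons_cons]
        refine ⟨fun hJ hK => ?_, h4⟩
        rw [hmaxb hJ]
        exact (h2 (by simp) hK).symm
    · rw [List.pairwise_cons]
      exact ⟨fun K hK x hx y hy => (hmax x hx).trans (V_ge ht K hK y hy), h5⟩

/-- chains are lists satisfying `V 0` -/
def equivV (n : ℕ) (hn : 1 ≤ n) :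
    SubsimplexChain n ≃ {l : List (Finset (Fin (n + 1))) | V 0 l} where
  toFun c := ⟨c.pieces, by
    obtain ⟨l, hne, h2, hmin, hmax, hch, -⟩ := c
    cases l with
    | nil => exact absurd rfl hne
    | cons J t =>
      have hJ : J.Nonempty := by
        rw [← Finset.card_pos]; have := h2 J (by simp); omega
      have hm := hmin hJ
      simp only [List.head_cons] at hm
      exact V_of t J 0 (hm ▸ J.min'_mem hJ) (fun x _ => Fin.zero_le x) h2 hmax hch⟩
  invFun l :=
    have hne : l.1 ≠ [] := by
      intro e
      have h := l.2
      rw [Set.mem_setOf_eq, e] at h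
      have h : (0 : Fin (n + 1)) = ⊤ := h
      rw [Fin.top_eq_last, Fin.ext_iff] at h
      simp at h; omega
    have h := of_V l.1 0 l.2
    ⟨l.1, hne, h.1, h.2.1 hne, h.2.2.1 hne, h.2.2.2.1, h.2.2.2.2⟩
  left_inv _ := rfl
  right_inv _ := rfl

end SSC

theorem card_subsimplexChain (n : ℕ) (hn : 1 ≤ n) :
    Finite (SubsimplexChain n) ∧
      Nat.card (SubsimplexChain n) = 3 ^ (n - 1) ∧
      Nonempty (SubsimplexChain n ≃ (Fin (n - 1) → Fin 3)) := by
  obtain ⟨hf, hc⟩ := SSC.count n (n - 1) (by omega)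
  have e0 : (⟨n - (n - 1 + 1), by omega⟩ : Fin (n + 1)) = 0 := by
    rw [Fin.ext_iff]; simp; omega
  rw [e0] at hf hc
  have e := SSC.equivV n hn
  have hfin : Finite {l : List (Finset (Fin (n + 1))) | SSC.V 0 l} := hf
  have hfin' : Finite (SubsimplexChain n) := Finite.of_equiv _ e.symm
  have hcard : Nat.card (SubsimplexChain n) = 3 ^ (n - 1) := by
    rw [Nat.card_congr e, ← hc]; rfl
  refine ⟨hfin', hcard, Finite.card_eq.1 ?_⟩
  rw [hcard]; simp
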